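/- arXiv:2603.21137 — 4 statements merged into one kernel-verified Lean document; each statement's English description precedes it below -/
import Mathlib

section
/- Let A be any n×n real matrix and let L be the 2n×2n block matrix L = [[0, Iₙ],[0, A]]. Then for every h ∈ ℝ, the matrix exponential has the block form exp(hL) = [[Iₙ, h φ₁(hA)],[0, exp(hA)]], where φ₁(hA) = ∫₀¹ exp(σ h A) dσ. -/
open Matrix

/-!
The block matrix factors as `[[0, B], [0, A]] = X * Y` with `X = [B; A]` and `Y = [0, 1]`, while
`Y * X = A`. In any Banach algebra `exp a = 1 + a * φ₁(a)`, and `Y * φ₁(X * Y) = φ₁(Y * X) * Y`, so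
`exp (X * Y) = 1 + X * φ₁(A) * Y = [[1, B * φ₁(A)], [0, 1 + A * φ₁(A)]]`.
-/

open NormedSpace intervalIntegral

section BanachAlgebra

variable {𝔸 : Type*} [NormedRing 𝔸] [NormedAlgebra ℝ 𝔸]

/-- The function `φ₁(a) = ∫₀¹ exp (σ a) dσ` of exponential integrators, as a Bochner integral. -/
noncomputable def phiOne (a : 𝔸) : 𝔸 :=
  ∫ σ in (0 : ℝ)..1, exp (σ • a)

variable [CompleteSpace 𝔸]

theorem continuous_exp_smul_const (a : 𝔸) : Continuous fun σ : ℝ => exp (σ • a) :=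
  continuous_iff_continuousAt.2 fun σ => (hasDerivAt_exp_smul_const a σ).continuousAt

theorem map_phiOne {E : Type*} [NormedAddCommGroup E] [NormedSpace ℝ E] [CompleteSpace E]
    (T : 𝔸 →L[ℝ] E) (a : 𝔸) : T (phiOne a) = ∫ σ in (0 : ℝ)..1, T (exp (σ • a)) :=
  (T.intervalIntegral_comp_comm ((continuous_exp_smul_const a).intervalIntegrable 0 1)).symm

theorem exp_eq_one_add_mul_phiOne (a : 𝔸) : exp a = 1 + a * phiOne a := by
  have h_integrable : IntervalIntegrable (fun σ : ℝ => a * exp (σ • a)) MeasureTheory.volume 0 1 :=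
    (continuous_const.mul (continuous_exp_smul_const a)).intervalIntegrable 0 1
  calc exp a = 1 + (exp ((1 : ℝ) • a) - exp ((0 : ℝ) • a)) := by
        rw [one_smul, zero_smul, exp_zero, add_sub_cancel]
    _ = 1 + ∫ σ in (0 : ℝ)..1, a * exp (σ • a) := by
        rw [integral_eq_sub_of_hasDerivAt (fun σ _ => hasDerivAt_exp_smul_const' a σ) h_integrable]
    _ = 1 + a * phiOne a := congrArg (1 + ·) (map_phiOne (ContinuousLinearMap.mul ℝ 𝔸 a) a).symm

end BanachAlgebra

theorem matrix_mul_pow_of_intertwine {R l m : Type*} [Semiring R] [Fintype l] [DecidableEq l]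
    [Fintype m] [DecidableEq m] {X : Matrix l m R} {M : Matrix m m R} {N : Matrix l l R}
    (h : X * M = N * X) (k : ℕ) : X * M ^ k = N ^ k * X := by
  induction k with
  | zero => rw [pow_zero, pow_zero, Matrix.mul_one, Matrix.one_mul]
  | succ k ih =>
    rw [pow_succ, ← Matrix.mul_assoc, ih, Matrix.mul_assoc, h, ← Matrix.mul_assoc, ← pow_succ]

section BanachMatrix

open scoped Matrix.Norms.Operator

-- Instance search does not unfold the uniformity of the norm to the entrywise one.
local instance matrix_completeSpace {R l m : Type*} [NormedRing R] [CompleteSpace R] [Fintype l]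
    [Fintype m] : @CompleteSpace (Matrix l m R) PseudoMetricSpace.toUniformSpace :=
  inferInstanceAs (CompleteSpace (l → m → R))

variable {R l m : Type*} [NormedRing R] [NormedAlgebra ℝ R] [CompleteSpace R]
  [Fintype l] [DecidableEq l] [Fintype m] [DecidableEq m]

theorem phiOne_eq_matrix_integral (A : Matrix m m R) :
    phiOne A = of fun i j => ∫ σ in (0 : ℝ)..1, exp (σ • A) i j := by
  ext i j
  exact map_phiOne ⟨entryLinearMap ℝ R i j, continuous_id.matrix_elem i j⟩ A

theorem matrix_mul_exp_of_intertwine {X : Matrix l m R} {M : Matrix m m R} {N : Matrix l l R}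
    (h : X * M = N * X) : X * exp M = exp N * X := by
  have hM : HasSum (fun k : ℕ => X * ((k.factorial : ℝ)⁻¹ • M ^ k)) (X * exp M) :=
    (exp_series_hasSum_exp' M).map (addMonoidHomMulLeft X)
      (continuous_const.matrix_mul continuous_id)
  have hN : HasSum (fun k : ℕ => (k.factorial : ℝ)⁻¹ • N ^ k * X) (exp N * X) :=
    (exp_series_hasSum_exp' N).map (addMonoidHomMulRight X)
      (continuous_id.matrix_mul continuous_const)
  refine hM.unique (hN.congr_fun fun k => ?_)
  rw [Matrix.mul_smul, matrix_mul_pow_of_intertwine h, Matrix.smul_mul]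

theorem matrix_mul_phiOne_of_intertwine {X : Matrix l m R} {M : Matrix m m R} {N : Matrix l l R}
    (h : X * M = N * X) : X * phiOne M = phiOne N * X := by
  have hσ (σ : ℝ) : X * exp (σ • M) = exp (σ • N) * X :=
    matrix_mul_exp_of_intertwine (by rw [Matrix.mul_smul, h, Matrix.smul_mul])
  let mulLeft : Matrix m m R →L[ℝ] Matrix l m R :=
    ⟨mulLeftLinearMap m ℝ X, continuous_const.matrix_mul continuous_id⟩
  let mulRight : Matrix l l R →L[ℝ] Matrix l m R :=
    ⟨mulRightLinearMap l ℝ X, continuous_id.matrix_mul continuous_const⟩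
  calc X * phiOne M = ∫ σ in (0 : ℝ)..1, X * exp (σ • M) := map_phiOne mulLeft M
    _ = ∫ σ in (0 : ℝ)..1, exp (σ • N) * X := by simp only [hσ]
    _ = phiOne N * X := (map_phiOne mulRight N).symm

theorem matrix_exp_mul_eq_one_add (X : Matrix l m R) (Y : Matrix m l R) :
    exp (X * Y) = 1 + X * phiOne (Y * X) * Y :=
  calc exp (X * Y) = 1 + X * Y * phiOne (X * Y) := exp_eq_one_add_mul_phiOne (X * Y)
    _ = 1 + X * phiOne (Y * X) * Y := by
        rw [Matrix.mul_assoc, matrix_mul_phiOne_of_intertwine (Matrix.mul_assoc Y X Y).symm,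
          ← Matrix.mul_assoc]

theorem exp_fromBlocks_zero_left (B : Matrix l m R) (A : Matrix m m R) :
    exp (fromBlocks (0 : Matrix l l R) B 0 A) = fromBlocks 1 (B * phiOne A) 0 (exp A) := by
  have hXY : fromRows B A * fromCols (0 : Matrix m l R) 1 = fromBlocks 0 B 0 A := by
    simp only [fromRows_mul_fromCols, Matrix.mul_zero, Matrix.mul_one]
  have hYX : fromCols (0 : Matrix m l R) (1 : Matrix m m R) * fromRows B A = A := by
    rw [fromCols_mul_fromRows, Matrix.zero_mul, Matrix.one_mul, zero_add]
  have hA : 1 + A * phiOne A = exp A := (exp_eq_one_add_mul_phiOne A).symm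
  rw [← hXY, matrix_exp_mul_eq_one_add, hYX, fromRows_mul, fromRows_mul_fromCols, ← fromBlocks_one,
    fromBlocks_add]
  simp only [Matrix.mul_zero, Matrix.mul_one, add_zero, zero_add, hA]

end BanachMatrix

theorem exp_block_triangular_general {R l m : Type*} [NormedRing R] [NormedAlgebra ℝ R]
    [CompleteSpace R] [Fintype l] [DecidableEq l] [Fintype m] [DecidableEq m]
    (B : Matrix l m R) (A : Matrix m m R) :
    exp (fromBlocks (0 : Matrix l l R) B 0 A) =
      fromBlocks 1 (B * of fun i j => ∫ σ in (0 : ℝ)..1, exp (σ • A) i j) 0 (exp A) :=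
  phiOne_eq_matrix_integral A ▸ exp_fromBlocks_zero_left B A

/-- **Block structure of the exponential of `L = [[0, Iₙ], [0, A]]`.**
For any real `n × n` matrix `A` and every `h ∈ ℝ`,
`exp(hL) = [[Iₙ, h φ₁(hA)], [0, exp(hA)]]` where `φ₁(hA) = ∫₀¹ exp(σhA) dσ`
(computed entrywise). -/
theorem exp_block_triangular (n : ℕ) (A : Matrix (Fin n) (Fin n) ℝ) (h : ℝ) :
    NormedSpace.exp (h • Matrix.fromBlocks (0 : Matrix (Fin n) (Fin n) ℝ) (1 : Matrix (Fin n) (Fin n) ℝ) (0 : Matrix (Fin n) (Fin n) ℝ) A) =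
      Matrix.fromBlocks (1 : Matrix (Fin n) (Fin n) ℝ)
        (h • Matrix.of fun i j => ∫ σ in (0:ℝ)..1, NormedSpace.exp (σ • h • A) i j)
        0 (NormedSpace.exp (h • A)) := by
  rw [fromBlocks_smul, smul_zero, exp_block_triangular_general, Matrix.smul_mul, Matrix.one_mul]
end

section
/- Let A be an n×n real skew-symmetric matrix and let L be the 2n×2n block matrix L = [[0, Iₙ],[0, A]]. Then for every h ≥ 0, the operator norm (induced by the Euclidean norm on ℝ^{2n}) of exp(hL) satisfies ‖exp(hL)‖ ≤ 1 + h. In particular, for every V = (a, b) with a, b ∈ ℝⁿ, ‖exp(hL) V‖² ≤ (1 + h)² (‖a‖² + ‖b‖²). -/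
open Matrix

/-!
Writing `(p, q) = exp (t • L) V`, one has `p' = q` and `q' = A q`. Dissipativity `A + Aᴴ ≤ 0` says
that `re ⟪q, A q⟫ ≤ 0`, so the norm of `q` is nonincreasing; hence `p` has speed at most `‖q 0‖` and
`‖p t‖ ≤ ‖p 0‖ + t ‖q 0‖`. Thus `(‖p t‖, ‖q t‖)` is dominated by the image of `(‖p 0‖, ‖q 0‖)` under
the planar shear `(α, β) ↦ (α + t β, β)`, which dilates lengths by at most `1 + t`.
-/

section Evolution

variable {E : Type*} [NormedAddCommGroup E] [NormedSpace ℝ E]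

theorem antitone_norm_of_re_inner_hasDerivAt_nonpos {𝕜 : Type*} [RCLike 𝕜] [InnerProductSpace 𝕜 E]
    {q q' : ℝ → E} (hq : ∀ t, HasDerivAt q (q' t) t)
    (hqq' : ∀ t, RCLike.re (inner 𝕜 (q t) (q' t)) ≤ 0) :
    Antitone fun t => ‖q t‖ := by
  have hderiv (t : ℝ) :
      HasDerivAt (fun s => ‖q s‖ ^ 2) (2 * RCLike.re (inner 𝕜 (q t) (q' t))) t := by
    have hre := (RCLike.reCLM (K := 𝕜)).hasFDerivAt.comp_hasDerivAt t ((hq t).inner 𝕜 (hq t))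
    rw [RCLike.reCLM_apply, map_add, inner_re_symm (q' t), ← two_mul] at hre
    exact hre.congr_of_eventuallyEq (.of_forall fun s => norm_sq_eq_re_inner (𝕜 := 𝕜) (q s))
  have hanti : Antitone fun t => ‖q t‖ ^ 2 :=
    antitone_of_hasDerivAt_nonpos hderiv fun t =>
      mul_nonpos_of_nonneg_of_nonpos zero_le_two (hqq' t)
  exact fun s t hst => (sq_le_sq₀ (norm_nonneg _) (norm_nonneg _)).1 (hanti hst)

theorem norm_le_norm_add_mul_of_norm_hasDerivAt_le {p p' : ℝ → E} {C t : ℝ}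
    (hp : ∀ s, HasDerivAt p (p' s) s) (hC : ∀ s, 0 ≤ s → ‖p' s‖ ≤ C) (ht : 0 ≤ t) :
    ‖p t‖ ≤ ‖p 0‖ + t * C := by
  have hsub : ‖p t - p 0‖ ≤ C * (t - 0) :=
    norm_image_sub_le_of_norm_deriv_le_segment' (fun s _ => (hp s).hasDerivWithinAt)
      (fun s hs => hC s hs.1) t ⟨ht, le_rfl⟩
  linarith [norm_le_norm_add_norm_sub' (p t) (p 0)]

theorem shear_sq_add_sq_le {R : Type*} [CommRing R] [LinearOrder R] [IsStrictOrderedRing R]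
    {t : R} (ht : 0 ≤ t) (α β : R) :
    (α + t * β) ^ 2 + β ^ 2 ≤ (1 + t) ^ 2 * (α ^ 2 + β ^ 2) := by
  have hdefect : 0 ≤ t * (α ^ 2 + β ^ 2 + (α - β) ^ 2 + t * α ^ 2) := by positivity
  linear_combination hdefect

theorem norm_sq_add_norm_sq_le_of_hasDerivAt {𝕜 : Type*} [RCLike 𝕜] [InnerProductSpace 𝕜 E]
    {p q q' : ℝ → E} {t : ℝ} (hp : ∀ s, HasDerivAt p (q s) s) (hq : ∀ s, HasDerivAt q (q' s) s)
    (hqq' : ∀ s, RCLike.re (inner 𝕜 (q s) (q' s)) ≤ 0) (ht : 0 ≤ t) :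
    ‖p t‖ ^ 2 + ‖q t‖ ^ 2 ≤ (1 + t) ^ 2 * (‖p 0‖ ^ 2 + ‖q 0‖ ^ 2) := by
  have hq_norm : Antitone fun s => ‖q s‖ := antitone_norm_of_re_inner_hasDerivAt_nonpos hq hqq'
  have hp_norm : ‖p t‖ ≤ ‖p 0‖ + t * ‖q 0‖ :=
    norm_le_norm_add_mul_of_norm_hasDerivAt_le hp (fun s hs => hq_norm hs) ht
  calc ‖p t‖ ^ 2 + ‖q t‖ ^ 2
      ≤ (‖p 0‖ + t * ‖q 0‖) ^ 2 + ‖q 0‖ ^ 2 := by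
        gcongr
        exact hq_norm ht
    _ ≤ (1 + t) ^ 2 * (‖p 0‖ ^ 2 + ‖q 0‖ ^ 2) := shear_sq_add_sq_le ht _ _

end Evolution

section Matrix

open scoped ComplexOrder

variable {𝕜 ι κ : Type*} [RCLike 𝕜] [Fintype ι] [Fintype κ]

theorem norm_sq_toLp_sumElim (a : EuclideanSpace 𝕜 ι) (b : EuclideanSpace 𝕜 κ) :
    ‖WithLp.toLp 2 (Sum.elim a.ofLp b.ofLp)‖ ^ 2 = ‖a‖ ^ 2 + ‖b‖ ^ 2 := by
  simp [EuclideanSpace.norm_sq_eq]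

theorem norm_sq_eq_comp_inl_add_comp_inr (V : EuclideanSpace 𝕜 (ι ⊕ κ)) :
    ‖V‖ ^ 2 = ‖WithLp.toLp 2 (V.ofLp ∘ Sum.inl)‖ ^ 2 + ‖WithLp.toLp 2 (V.ofLp ∘ Sum.inr)‖ ^ 2 := by
  rw [← norm_sq_toLp_sumElim, Sum.elim_comp_inl_inr]

theorem hasDerivAt_toLp_comp (f : κ → ι) {x : ℝ → EuclideanSpace 𝕜 ι} {x' : EuclideanSpace 𝕜 ι}
    {t : ℝ} (hx : HasDerivAt x x' t) :
    HasDerivAt (fun s => (WithLp.toLp 2 ((x s).ofLp ∘ f) : EuclideanSpace 𝕜 κ))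
      (WithLp.toLp 2 (x'.ofLp ∘ f)) t := by
  have hcomp : HasDerivAt (fun s => (x s).ofLp ∘ f) (x'.ofLp ∘ f) t :=
    hasDerivAt_pi.2 fun i => (PiLp.hasFDerivAt_apply 2 (x t) (f i)).comp_hasDerivAt t hx
  exact (PiLp.hasFDerivAt_toLp 2 _).comp_hasDerivAt t hcomp

theorem re_inner_toEuclideanLin_nonpos [DecidableEq ι] {A : Matrix ι ι 𝕜}
    (hA : (-(A + Aᴴ)).PosSemidef) (x : EuclideanSpace 𝕜 ι) :
    RCLike.re (inner 𝕜 x (toEuclideanLin A x)) ≤ 0 := by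
  have hnonneg := (isPositive_toEuclideanLin_iff.2 hA).re_inner_nonneg_right x
  simp only [map_neg, map_add, toEuclideanLin_conjTranspose_eq_adjoint, LinearMap.neg_apply,
    LinearMap.add_apply, inner_neg_right, inner_add_right, LinearMap.adjoint_inner_right,
    inner_re_symm (toEuclideanLin A x)] at hnonneg
  linarith

open scoped Norms.Operator in
theorem hasDerivAt_toEuclideanLin_exp_smul [DecidableEq ι] (M : Matrix ι ι 𝕜)
    (V : EuclideanSpace 𝕜 ι) (t : ℝ) :
    HasDerivAt (fun s : ℝ => toEuclideanLin (NormedSpace.exp (s • M)) V)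
      (toEuclideanLin M (toEuclideanLin (NormedSpace.exp (t • M)) V)) t := by
  let evalAt : Matrix ι ι 𝕜 →ₗ[ℝ] EuclideanSpace 𝕜 ι :=
    (LinearMap.applyₗ V ∘ₗ toEuclideanLin.toLinearMap).restrictScalars ℝ
  have hderiv := evalAt.toContinuousLinearMap.hasFDerivAt.comp_hasDerivAt t
    (hasDerivAt_exp_smul_const' M t)
  have hmul : evalAt (M * NormedSpace.exp (t • M)) =
      toEuclideanLin M (toEuclideanLin (NormedSpace.exp (t • M)) V) := by
    simp [evalAt, toLpLin_apply]
  exact hmul ▸ hderiv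

theorem norm_toEuclideanLin_exp_smul_fromBlocks_le [DecidableEq ι] {A : Matrix ι ι 𝕜}
    (hA : (-(A + Aᴴ)).PosSemidef) {h : ℝ} (hh : 0 ≤ h) (V : EuclideanSpace 𝕜 (ι ⊕ ι)) :
    ‖toEuclideanLin (NormedSpace.exp (h • fromBlocks (0 : Matrix ι ι 𝕜) 1 0 A)) V‖ ≤
      (1 + h) * ‖V‖ := by
  let L : Matrix (ι ⊕ ι) (ι ⊕ ι) 𝕜 := fromBlocks 0 1 0 A
  let x (t : ℝ) : EuclideanSpace 𝕜 (ι ⊕ ι) := toEuclideanLin (NormedSpace.exp (t • L)) V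
  let p (t : ℝ) : EuclideanSpace 𝕜 ι := WithLp.toLp 2 ((x t).ofLp ∘ Sum.inl)
  let q (t : ℝ) : EuclideanSpace 𝕜 ι := WithLp.toLp 2 ((x t).ofLp ∘ Sum.inr)
  have hx (t : ℝ) : HasDerivAt x (WithLp.toLp 2 (Sum.elim (q t).ofLp (A *ᵥ (q t).ofLp))) t := by
    have hLx : toEuclideanLin L (x t) = WithLp.toLp 2 (Sum.elim (q t).ofLp (A *ᵥ (q t).ofLp)) := by
      rw [toLpLin_apply, fromBlocks_mulVec]
      simp [q]
    exact hLx ▸ hasDerivAt_toEuclideanLin_exp_smul L V t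
  have hp (t : ℝ) : HasDerivAt p (q t) t := hasDerivAt_toLp_comp Sum.inl (hx t)
  have hq (t : ℝ) : HasDerivAt q (toEuclideanLin A (q t)) t := hasDerivAt_toLp_comp Sum.inr (hx t)
  have hx_zero : x 0 = V := by simp [x, toLpLin_apply]
  have hsq : ‖x h‖ ^ 2 ≤ ((1 + h) * ‖V‖) ^ 2 := by
    rw [mul_pow, ← hx_zero, norm_sq_eq_comp_inl_add_comp_inr (x h),
      norm_sq_eq_comp_inl_add_comp_inr (x 0)]
    exact norm_sq_add_norm_sq_le_of_hasDerivAt hp hq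
      (fun t => re_inner_toEuclideanLin_nonpos hA (q t)) hh
  exact (sq_le_sq₀ (norm_nonneg _) (by positivity)).1 hsq

theorem exp_block_norm_le_general [DecidableEq ι] {A : Matrix ι ι 𝕜}
    (hA : (-(A + Aᴴ)).PosSemidef) {h : ℝ} (hh : 0 ≤ h) :
    (∀ V : EuclideanSpace 𝕜 (ι ⊕ ι),
      ‖toEuclideanLin (NormedSpace.exp (h • fromBlocks (0 : Matrix ι ι 𝕜) 1 0 A)) V‖ ≤
        (1 + h) * ‖V‖) ∧
    (∀ a b : EuclideanSpace 𝕜 ι,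
      ‖toEuclideanLin (NormedSpace.exp (h • fromBlocks (0 : Matrix ι ι 𝕜) 1 0 A))
          (WithLp.toLp 2 (Sum.elim a.ofLp b.ofLp))‖ ^ 2 ≤
        (1 + h) ^ 2 * (‖a‖ ^ 2 + ‖b‖ ^ 2)) := by
  refine ⟨norm_toEuclideanLin_exp_smul_fromBlocks_le hA hh, fun a b => ?_⟩
  rw [← norm_sq_toLp_sumElim, ← mul_pow]
  gcongr
  exact norm_toEuclideanLin_exp_smul_fromBlocks_le hA hh _

end Matrix

/-- **Operator-norm bound `‖exp(hL)‖ ≤ 1 + h` for `L = [[0, Iₙ], [0, A]]` with `A`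
skew-symmetric.** For every `h ≥ 0`, the Euclidean operator norm of `exp(hL)` is at most
`1 + h`; in particular, for every `V = (a, b)` with `a, b ∈ ℝⁿ`,
`‖exp(hL) V‖² ≤ (1 + h)² (‖a‖² + ‖b‖²)`. -/
theorem exp_block_norm_le (n : ℕ) (A : Matrix (Fin n) (Fin n) ℝ) (hSkew : Aᵀ = -A)
    (h : ℝ) (hh : 0 ≤ h) :
    (∀ V : EuclideanSpace ℝ (Fin n ⊕ Fin n),
      ‖Matrix.toEuclideanLin
          (NormedSpace.exp (h • Matrix.fromBlocks (0 : Matrix (Fin n) (Fin n) ℝ)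
            (1 : Matrix (Fin n) (Fin n) ℝ) (0 : Matrix (Fin n) (Fin n) ℝ) A)) V‖
        ≤ (1 + h) * ‖V‖) ∧
    (∀ a b : EuclideanSpace ℝ (Fin n),
      ‖Matrix.toEuclideanLin
          (NormedSpace.exp (h • Matrix.fromBlocks (0 : Matrix (Fin n) (Fin n) ℝ)
            (1 : Matrix (Fin n) (Fin n) ℝ) (0 : Matrix (Fin n) (Fin n) ℝ) A))
          ((WithLp.equiv 2 (Fin n ⊕ Fin n → ℝ)).symm
            (Sum.elim (WithLp.equiv 2 (Fin n → ℝ) a) (WithLp.equiv 2 (Fin n → ℝ) b)))‖ ^ 2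
        ≤ (1 + h) ^ 2 * (‖a‖ ^ 2 + ‖b‖ ^ 2)) := by
  exact exp_block_norm_le_general (by simp [hSkew, PosSemidef.zero]) hh
end

section
/- (Stability of the symmetric exponential integrator) Let L be a real 2n×2n matrix such that ‖exp(hL)‖ ≤ 1 + h for all h ∈ [0,1], and let F : ℝ^{2n} → ℝ^{2n} be globally Lipschitz with Lipschitz constant L_F. Define the one-step map on pairs Φ_h(V₁, V₂) := (exp(2hL) V₂ + 2h exp(hL) F(V₂), V₁). Then there exists a constant C > 0, independent of h (one may take C = 3 + 4 L_F), such that for all h ∈ (0,1] and all 𝒱 = (V₁,V₂), 𝒲 = (W₁,W₂) ∈ ℝ^{2n} × ℝ^{2n}, ‖Φ_h(𝒱) − Φ_h(𝒲)‖ ≤ (1 + C h) ‖𝒱 − 𝒲‖. -/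
open Matrix

open scoped NNReal ENNReal

/-!
A step moves `V₁` unchanged to the second component and makes the new first component a Lipschitz
function of `V₂` alone. Since `exp(2hL) = exp(hL)²`, its Lipschitz constant is at most
`(1 + h)² + 2h(1 + h)L_F`, and `h² ≤ h` makes this `1 + O(h)`. As the bound is at least `1`, it
also covers the shifted component, whatever the `ℓᵖ` norm on pairs.
-/

/-- One step of the symmetric exponential integrator for `dU/dt = LU + F(U)` with step size `h`, on
pairs `(Uⁿ⁺¹, Uⁿ)` carrying the `ℓᵖ` norm. The map `S t` stands for `exp(tL)`; taking it as a
parameter allows any semigroup of maps, such as one with an unbounded generator. -/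
def symmExpStep {E : Type*} [AddCommGroup E] [Module ℝ E] (p : ℝ≥0∞) (S : ℝ≥0 → E → E)
    (F : E → E) (h : ℝ≥0) (V : WithLp p (E × E)) : WithLp p (E × E) :=
  WithLp.toLp p (S (2 * h) V.snd + (2 * h) • S h (F V.snd), V.fst)

theorem lipschitzWith_toLp_comp_snd_fst {α β γ : Type*} [PseudoEMetricSpace α]
    [PseudoEMetricSpace β] [PseudoEMetricSpace γ] (p : ℝ≥0∞) [Fact (1 ≤ p)] {K : ℝ≥0} {g : α → γ}
    (hg : LipschitzWith K g) (hK : 1 ≤ K) :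
    LipschitzWith K fun V : WithLp p (β × α) => WithLp.toLp p (g V.snd, V.fst) := by
  intro V W
  have new_le : edist (g V.snd) (g W.snd) ≤ K * edist V.snd W.snd := hg V.snd W.snd
  have shift_le : edist V.fst W.fst ≤ K * edist V.fst W.fst :=
    le_mul_of_one_le_left zero_le (by exact_mod_cast hK)
  rcases eq_or_ne p ∞ with rfl | hp
  · rw [WithLp.prod_edist_eq_sup, WithLp.prod_edist_eq_sup, max_comm (edist V.fst W.fst),
      mul_max]
    exact max_le_max new_le shift_le
  · have hp_pos : 0 < p.toReal :=
      ENNReal.toReal_pos (zero_lt_one.trans_le Fact.out).ne' hp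
    rw [WithLp.prod_edist_eq_add hp_pos, WithLp.prod_edist_eq_add hp_pos]
    calc (edist (g V.snd) (g W.snd) ^ p.toReal + edist V.fst W.fst ^ p.toReal) ^ (1 / p.toReal)
        ≤ ((K * edist V.snd W.snd) ^ p.toReal
            + (K * edist V.fst W.fst) ^ p.toReal) ^ (1 / p.toReal) := by gcongr
      _ = K * (edist V.fst W.fst ^ p.toReal + edist V.snd W.snd ^ p.toReal) ^ (1 / p.toReal) := by
        rw [ENNReal.mul_rpow_of_nonneg _ _ hp_pos.le, ENNReal.mul_rpow_of_nonneg _ _ hp_pos.le,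
          ← mul_add, ENNReal.mul_rpow_of_nonneg _ _ (by positivity), ← ENNReal.rpow_mul,
          mul_one_div_cancel hp_pos.ne', ENNReal.rpow_one, add_comm]

theorem lipschitzWith_comp_self_add_smul_comp {E : Type*} [SeminormedAddCommGroup E]
    [NormedSpace ℝ E] {A F : E → E} {K LF : ℝ≥0} (hA : LipschitzWith K A)
    (hF : LipschitzWith LF F) (c : ℝ≥0) :
    LipschitzWith (K * K + c * (K * LF)) fun v => A (A v) + c • A (F v) := by
  have smul_lip : LipschitzWith c fun v : E => c • v := by
    simpa only [NNReal.nnnorm_eq, NNReal.smul_def] using lipschitzWith_smul (β := E) (c : ℝ)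
  exact (hA.comp hA).add (smul_lip.comp (hA.comp hF))

theorem sEI_stability_general {E : Type*} [SeminormedAddCommGroup E] [NormedSpace ℝ E]
    (p : ℝ≥0∞) [Fact (1 ≤ p)] {S : ℝ≥0 → E → E} (S_add : ∀ s t, S (s + t) = S s ∘ S t)
    {h ω : ℝ≥0} (hh : h ≤ 1) (S_lip : LipschitzWith (1 + ω * h) (S h))
    {LF : ℝ≥0} {F : E → E} (hF : LipschitzWith LF F) :
    LipschitzWith (1 + (ω * (2 + ω) + 2 * (1 + ω) * LF) * h) (symmExpStep p S F h) := by
  have new_lip := lipschitzWith_comp_self_add_smul_comp S_lip hF (2 * h)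
  simp only [← Function.comp_apply (f := S h) (g := S h), ← S_add, ← two_mul] at new_lip
  refine lipschitzWith_toLp_comp_snd_fst p (new_lip.weaken ?_) le_self_add
  have h_sq_le : h * h ≤ h := mul_le_of_le_one_left zero_le hh
  calc (1 + ω * h) * (1 + ω * h) + 2 * h * ((1 + ω * h) * LF)
      = 1 + (2 * ω + 2 * LF) * h + (ω ^ 2 + 2 * ω * LF) * (h * h) := by ring
    _ ≤ 1 + (2 * ω + 2 * LF) * h + (ω ^ 2 + 2 * ω * LF) * h := by gcongr
    _ = 1 + (ω * (2 + ω) + 2 * (1 + ω) * LF) * h := by ring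

theorem toEuclideanLin_exp_add_smul {𝕜 m : Type*} [RCLike 𝕜] [Fintype m] [DecidableEq m]
    (A : Matrix m m 𝕜) (s t : 𝕜) :
    toEuclideanLin (NormedSpace.exp ((s + t) • A))
      = toEuclideanLin (NormedSpace.exp (s • A)) ∘ₗ toEuclideanLin (NormedSpace.exp (t • A)) := by
  rw [add_smul, Matrix.exp_add_of_commute _ _ (((Commute.refl A).smul_left s).smul_right t),
    Matrix.toLpLin_mul_same]

theorem lipschitzWith_symmExpStep_exp {m : Type*} [Fintype m] [DecidableEq m] (p : ℝ≥0∞)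
    [Fact (1 ≤ p)] {L : Matrix m m ℝ} {h ω : ℝ≥0} (hh : h ≤ 1)
    (exp_le : ∀ v, ‖toEuclideanLin (NormedSpace.exp ((h : ℝ) • L)) v‖ ≤ (1 + ω * h) * ‖v‖)
    {LF : ℝ≥0} {F : EuclideanSpace ℝ m → EuclideanSpace ℝ m} (hF : LipschitzWith LF F) :
    LipschitzWith (1 + (ω * (2 + ω) + 2 * (1 + ω) * LF) * h)
      (symmExpStep p (fun t => toEuclideanLin (NormedSpace.exp ((t : ℝ) • L))) F h) :=
  sEI_stability_general p
    (fun s t => congrArg DFunLike.coe (toEuclideanLin_exp_add_smul L (s : ℝ) t)) hh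
    (AddMonoidHomClass.lipschitz_of_bound_nnnorm _ _ exp_le) hF

/-- **Stability of the symmetric exponential integrator.**
Let `L` be a real `2n × 2n` matrix with `‖exp(hL)‖ ≤ 1 + h` for all `h ∈ [0,1]` (stated
vectorwise in the Euclidean norm), and let `F` be globally Lipschitz with constant `L_F`.
For the one-step map `Φ_h(V₁, V₂) = (exp(2hL) V₂ + 2h exp(hL) F(V₂), V₁)` there is a
constant `C > 0`, independent of `h`, with
`‖Φ_h(𝒱) − Φ_h(𝒲)‖ ≤ (1 + Ch) ‖𝒱 − 𝒲‖` for all `h ∈ (0,1]` and all pairs `𝒱, 𝒲`,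
where `‖(V₁,V₂)‖ = √(‖V₁‖² + ‖V₂‖²)`. -/
theorem sEI_stability (n : ℕ) (L : Matrix (Fin (2 * n)) (Fin (2 * n)) ℝ)
    (hL : ∀ h ∈ Set.Icc (0:ℝ) 1, ∀ V : EuclideanSpace ℝ (Fin (2 * n)),
      ‖Matrix.toEuclideanLin (NormedSpace.exp (h • L)) V‖ ≤ (1 + h) * ‖V‖)
    (LF : NNReal) (F : EuclideanSpace ℝ (Fin (2 * n)) → EuclideanSpace ℝ (Fin (2 * n)))
    (hF : LipschitzWith LF F) :
    ∃ C > (0:ℝ), ∀ h ∈ Set.Ioc (0:ℝ) 1,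
      ∀ V₁ V₂ W₁ W₂ : EuclideanSpace ℝ (Fin (2 * n)),
        Real.sqrt
            (‖(Matrix.toEuclideanLin (NormedSpace.exp ((2 * h) • L)) V₂
                + (2 * h) • Matrix.toEuclideanLin (NormedSpace.exp (h • L)) (F V₂))
              - (Matrix.toEuclideanLin (NormedSpace.exp ((2 * h) • L)) W₂
                + (2 * h) • Matrix.toEuclideanLin (NormedSpace.exp (h • L)) (F W₂))‖ ^ 2
              + ‖V₁ - W₁‖ ^ 2)
          ≤ (1 + C * h) * Real.sqrt (‖V₁ - W₁‖ ^ 2 + ‖V₂ - W₂‖ ^ 2) := by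
  refine ⟨1 * (2 + 1) + 2 * (1 + 1) * LF, by positivity, fun h hh V₁ V₂ W₁ W₂ => ?_⟩
  lift h to ℝ≥0 using hh.1.le
  simpa [symmExpStep, WithLp.prod_norm_eq_of_L2, NNReal.smul_def] using
    (lipschitzWith_symmExpStep_exp 2 (ω := 1) hh.2 (by simpa using hL h ⟨h.coe_nonneg, hh.2⟩)
      hF).norm_sub_le (WithLp.toLp 2 (V₁, V₂)) (WithLp.toLp 2 (W₁, W₂))
end

section
/- (Second-order convergence of the sEI) Let L be a real m×m matrix with ‖exp(hL)‖ ≤ 1 + h for h ∈ [0,1], and let F : ℝ^m → ℝ^m be C² with F, DF, D²F globally bounded (in particular F is globally Lipschitz). Let T > 0 and let U : [0, T] → ℝ^m be the exact solution of U' = LU + F(U). For a step size h ∈ (0, 1], define the numerical solution by U¹ = exp(hL) U⁰ + h exp(hL) F(U⁰) with U⁰ = U(0), and Uⁿ⁺¹ = exp(2hL) Uⁿ⁻¹ + 2h exp(hL) F(Uⁿ) for n ≥ 1. Then there exists a constant C, independent of n and h but depending on T, such that ‖U(nh) − Uⁿ‖ ≤ C h² for all 0 ≤ n ≤ T/h.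 -/
open Matrix

/-!
Passing to the interaction picture `V t = exp(-tL) U(t)`, `vₙ = exp(-nhL) Uⁿ` removes the linear
part: `V` solves `V' = G(t, V)` with `G(t, x) = exp(-tL) F(exp(tL) x)`, and `vₙ` is exactly the
leapfrog method for this equation, started by one explicit Euler step. The field `G` is `C²` and, on
`[0, T]`, uniformly Lipschitz in `x`. Taylor expansion gives a leapfrog defect `O(h³)` (symmetry
kills the `h²` term) and an Euler defect `O(h²)`; the latter is made only once. A two-step discrete
Grönwall inequality accumulates them to `O(h²)`, and `exp(nhL)`, bounded on `[0, T]`, transports the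
estimate back.
-/

open Set NormedSpace
open scoped NNReal

section Quadrature

variable {E : Type*} [NormedAddCommGroup E] [NormedSpace ℝ E] {f f' f'' : ℝ → E}

lemma norm_image_sub_le_of_norm_deriv_le_pow {a b C : ℝ} {n : ℕ}
    (hf : ∀ x ∈ Icc a b, HasDerivWithinAt f (f' x) (Icc a b) x)
    (bound : ∀ x ∈ Icc a b, ‖f' x‖ ≤ C * (x - a) ^ n) {x : ℝ} (hx : x ∈ Icc a b) :
    ‖f x - f a‖ ≤ C / (n + 1) * (x - a) ^ (n + 1) := by
  have hB (t : ℝ) : HasDerivAt (fun t ↦ C / (n + 1) * (t - a) ^ (n + 1)) (C * (t - a) ^ n) t := by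
    refine ((((hasDerivAt_id t).sub_const a).pow (n + 1)).const_mul (C / (n + 1))).congr_deriv ?_
    simp only [id_eq, Nat.add_sub_cancel, Nat.cast_add, Nat.cast_one]
    field_simp
  refine image_norm_le_of_norm_deriv_right_le_deriv_boundary (f := fun t ↦ f t - f a) (f' := f')
    (fun t ht ↦ ((hf t ht).sub_const _).continuousWithinAt) (fun t ht ↦ ?_) (by simp) hB
    (fun t ht ↦ bound t (Ico_subset_Icc_self ht)) hx
  exact ((hf t (Ico_subset_Icc_self ht)).sub_const _).mono_of_mem_nhdsWithin
    (Icc_mem_nhdsGE_of_mem ht)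

lemma norm_euler_defect_le {a b : ℝ} {K : ℝ≥0} (hab : a ≤ b)
    (hf : ∀ x ∈ Icc a b, HasDerivWithinAt f (f' x) (Icc a b) x)
    (hf' : LipschitzOnWith K f' (Icc a b)) :
    ‖f b - f a - (b - a) • f' a‖ ≤ K / 2 * (b - a) ^ 2 := by
  have hd (x : ℝ) (hx : x ∈ Icc a b) :
      HasDerivWithinAt (fun x ↦ f x - (x - a) • f' a) (f' x - f' a) (Icc a b) x := by
    simpa using! (hf x hx).sub (((hasDerivWithinAt_id x _).sub_const a).smul_const (f' a))
  have bound (x : ℝ) (hx : x ∈ Icc a b) : ‖f' x - f' a‖ ≤ K * (x - a) ^ 1 := by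
    simpa [Real.norm_of_nonneg (sub_nonneg.2 hx.1)] using
      hf'.norm_sub_le hx (left_mem_Icc.2 hab)
  convert norm_image_sub_le_of_norm_deriv_le_pow hd bound (right_mem_Icc.2 hab) using 2
  · simp only [sub_self, zero_smul, sub_zero]
    abel
  · norm_num

lemma hasDerivWithinAt_comp_const_add {y : E} {c x : ℝ} {s t : Set ℝ}
    (hf : HasDerivWithinAt f y t (c + x)) (hst : MapsTo (c + ·) s t) :
    HasDerivWithinAt (fun x ↦ f (c + x)) y s x := by
  simpa using! hf.scomp x ((hasDerivWithinAt_id x s).const_add c) hst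

lemma hasDerivWithinAt_comp_const_sub {y : E} {c x : ℝ} {s t : Set ℝ}
    (hf : HasDerivWithinAt f y t (c - x)) (hst : MapsTo (c - ·) s t) :
    HasDerivWithinAt (fun x ↦ f (c - x)) (-y) s x := by
  simpa using! hf.scomp x ((hasDerivWithinAt_id x s).const_sub c) hst

/-- The function `s ↦ f (c + s) - f (c - s) - 2 s f' c` and its first derivative vanish at `0`, and
its second derivative is `f'' (c + s) - f'' (c - s) = O(s)`. -/
lemma norm_midpoint_defect_le {c h : ℝ} {K : ℝ≥0} (hh : 0 ≤ h)
    (hf : ∀ x ∈ Icc (c - h) (c + h), HasDerivWithinAt f (f' x) (Icc (c - h) (c + h)) x)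
    (hf' : ∀ x ∈ Icc (c - h) (c + h), HasDerivWithinAt f' (f'' x) (Icc (c - h) (c + h)) x)
    (hf'' : LipschitzOnWith K f'' (Icc (c - h) (c + h))) :
    ‖f (c + h) - f (c - h) - (2 * h) • f' c‖ ≤ K / 3 * h ^ 3 := by
  have hadd : MapsTo (c + ·) (Icc 0 h) (Icc (c - h) (c + h)) :=
    fun s hs ↦ ⟨by linarith [hs.1], by linarith [hs.2]⟩
  have hsub : MapsTo (c - ·) (Icc 0 h) (Icc (c - h) (c + h)) :=
    fun s hs ↦ ⟨by linarith [hs.2], by linarith [hs.1]⟩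
  have hfirst (s : ℝ) (hs : s ∈ Icc 0 h) :
      HasDerivWithinAt (fun s ↦ f (c + s) - f (c - s) - (2 * s) • f' c)
        (f' (c + s) + f' (c - s) - (2 : ℝ) • f' c) (Icc 0 h) s := by
    simpa using! ((hasDerivWithinAt_comp_const_add (hf _ (hadd hs)) hadd).sub
      (hasDerivWithinAt_comp_const_sub (hf _ (hsub hs)) hsub)).sub
      (((hasDerivWithinAt_id s _).const_mul 2).smul_const (f' c))
  have hsecond (s : ℝ) (hs : s ∈ Icc 0 h) :
      HasDerivWithinAt (fun s ↦ f' (c + s) + f' (c - s) - (2 : ℝ) • f' c)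
        (f'' (c + s) - f'' (c - s)) (Icc 0 h) s := by
    simpa [sub_eq_add_neg] using! ((hasDerivWithinAt_comp_const_add (hf' _ (hadd hs)) hadd).add
      (hasDerivWithinAt_comp_const_sub (hf' _ (hsub hs)) hsub)).sub_const ((2 : ℝ) • f' c)
  have hsecond_le (s : ℝ) (hs : s ∈ Icc 0 h) :
      ‖f'' (c + s) - f'' (c - s)‖ ≤ 2 * K * (s - 0) ^ 1 := by
    have hdist : ‖c + s - (c - s)‖ = 2 * s := by
      rw [Real.norm_of_nonneg (by linarith [hs.1])]; ring
    calc ‖f'' (c + s) - f'' (c - s)‖ ≤ K * (2 * s) :=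
          hdist ▸ hf''.norm_sub_le (hadd hs) (hsub hs)
      _ = 2 * K * (s - 0) ^ 1 := by ring
  have hfirst_le (s : ℝ) (hs : s ∈ Icc 0 h) :
      ‖f' (c + s) + f' (c - s) - (2 : ℝ) • f' c‖ ≤ K * (s - 0) ^ 2 := by
    convert norm_image_sub_le_of_norm_deriv_le_pow hsecond hsecond_le hs using 2
    · simp [two_smul]
    · push_cast
      ring
  convert norm_image_sub_le_of_norm_deriv_le_pow hfirst hfirst_le (right_mem_Icc.2 hh) using 2
  · simp
  · norm_num
  · simp

end Quadrature

lemma le_add_mul_exp_of_two_step {d : ℕ → ℝ} {a b c : ℝ} {N : ℕ} (ha : 0 ≤ a) (hb : 0 ≤ b)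
    (hc : 0 ≤ c) (h0 : d 0 ≤ b) (h1 : 1 ≤ N → d 1 ≤ b)
    (hd : ∀ n, n + 2 ≤ N → d (n + 2) ≤ d n + a * d (n + 1) + c) {n : ℕ} (hn : n ≤ N) :
    d n ≤ (b + n * c) * Real.exp (n * a) := by
  induction n using Nat.twoStepInduction with
  | zero => simpa using h0
  | one =>
    have : 1 ≤ Real.exp a := Real.one_le_exp ha
    calc d 1 ≤ b * 1 := by simpa using h1 hn
      _ ≤ (b + (1 : ℕ) * c) * Real.exp ((1 : ℕ) * a) := by
        simp only [Nat.cast_one, one_mul]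
        gcongr
        linarith
  | more n ih₀ ih₁ =>
    have hstep : (1 + a) * Real.exp ((n + 1) * a) ≤ Real.exp ((n + 2) * a) := by
      rw [show ((n : ℝ) + 2) * a = a + (n + 1) * a by ring, Real.exp_add a]
      gcongr
      linarith [Real.add_one_le_exp a]
    have hone : 1 ≤ Real.exp ((n + 2) * a) := Real.one_le_exp (by positivity)
    replace ih₀ : d n ≤ (b + (n + 1) * c) * Real.exp ((n + 1) * a) := by
      refine (ih₀ (by omega)).trans ?_
      gcongr <;> linarith
    replace ih₁ : d (n + 1) ≤ (b + (n + 1) * c) * Real.exp ((n + 1) * a) := by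
      simpa using ih₁ (by omega)
    calc d (n + 2) ≤ d n + a * d (n + 1) + c := hd n hn
      _ ≤ (b + (n + 1) * c) * Real.exp ((n + 1) * a)
          + a * ((b + (n + 1) * c) * Real.exp ((n + 1) * a)) + c := by gcongr
      _ = (b + (n + 1) * c) * ((1 + a) * Real.exp ((n + 1) * a)) + c * 1 := by ring
      _ ≤ (b + (n + 1) * c) * Real.exp ((n + 2) * a) + c * Real.exp ((n + 2) * a) := by gcongr
      _ = (b + (n + 2 : ℕ) * c) * Real.exp ((n + 2 : ℕ) * a) := by push_cast; ring

section Leapfrog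

variable {E : Type*} [NormedAddCommGroup E] [NormedSpace ℝ E] {G : ℝ → E → E} {V : ℝ → E}
  {T h : ℝ} {v : ℕ → E} {K : ℝ≥0}

/-- The leapfrog (explicit two-step midpoint) method with step size `h` for the equation
`V' = G(t, V)`, its first step being one of the explicit Euler method. The term `v n` approximates
`V (n * h)`. -/
structure IsLeapfrog (G : ℝ → E → E) (h : ℝ) (v : ℕ → E) : Prop where
  euler : v 1 = v 0 + h • G 0 (v 0)
  step (n : ℕ) : v (n + 2) = v n + (2 * h) • G ((n + 1 : ℕ) * h) (v (n + 1))

namespace IsLeapfrog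

lemma norm_error_step_le (hv : IsLeapfrog G h v) (hh : 0 ≤ h) (n : ℕ)
    (hG : LipschitzWith K (G ((n + 1 : ℕ) * h))) :
    ‖V ((n + 2 : ℕ) * h) - v (n + 2)‖ ≤ ‖V (n * h) - v n‖
      + 2 * h * K * ‖V ((n + 1 : ℕ) * h) - v (n + 1)‖
      + ‖V ((n + 1 : ℕ) * h + h) - V ((n + 1 : ℕ) * h - h)
          - (2 * h) • G ((n + 1 : ℕ) * h) (V ((n + 1 : ℕ) * h))‖ := by
  set t : ℝ := (n + 1 : ℕ) * h with ht
  have hnext : ((n + 2 : ℕ) : ℝ) * h = t + h := by rw [ht]; push_cast; ring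
  have hprev : (n : ℝ) * h = t - h := by rw [ht]; push_cast; ring
  have hsplit : V (t + h) - v (n + 2) = (V (t - h) - v n)
      + (2 * h) • (G t (V t) - G t (v (n + 1)))
      + (V (t + h) - V (t - h) - (2 * h) • G t (V t)) := by
    rw [hv.step n]
    module
  have hlip : ‖(2 * h) • (G t (V t) - G t (v (n + 1)))‖ ≤ 2 * h * K * ‖V t - v (n + 1)‖ := by
    rw [norm_smul, Real.norm_of_nonneg (by positivity), mul_assoc (2 * h)]
    gcongr
    exact hG.norm_sub_le _ _
  rw [hnext, hprev, hsplit]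
  exact norm_add₃_le.trans (by gcongr)

lemma norm_error_le (hv : IsLeapfrog G h v) (hh : 0 < h)
    (hG : ∀ t ∈ Icc 0 T, LipschitzWith K (G t)) {C₁ C₂ : ℝ≥0} (h0 : v 0 = V 0)
    (heuler : h ≤ T → ‖V h - V 0 - h • G 0 (V 0)‖ ≤ C₁ * h ^ 2)
    (hmidpoint : ∀ t, h ≤ t → t + h ≤ T →
      ‖V (t + h) - V (t - h) - (2 * h) • G t (V t)‖ ≤ C₂ * h ^ 3)
    {n : ℕ} (hn : n * h ≤ T) :
    ‖V (n * h) - v n‖ ≤ (C₁ + T * C₂) * Real.exp (2 * K * T) * h ^ 2 := by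
  have hT {i : ℕ} (hi : i ≤ n) : i * h ≤ T := le_trans (by gcongr) hn
  have hstart : 1 ≤ n → ‖V ((1 : ℕ) * h) - v 1‖ ≤ C₁ * h ^ 2 := fun h1 ↦ by
    simpa [hv.euler, h0, sub_sub] using heuler (by simpa using hT h1)
  have hrec (i : ℕ) (hi : i + 2 ≤ n) : ‖V ((i + 2 : ℕ) * h) - v (i + 2)‖
      ≤ ‖V (i * h) - v i‖ + 2 * h * K * ‖V ((i + 1 : ℕ) * h) - v (i + 1)‖ + C₂ * h ^ 3 := by
    refine (hv.norm_error_step_le hh.le i (hG _ ⟨by positivity, hT (by omega)⟩)).trans ?_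
    gcongr
    refine hmidpoint _ (le_mul_of_one_le_left hh.le (by simp)) (le_of_eq_of_le ?_ (hT hi))
    push_cast
    ring
  have hinit : ‖V ((0 : ℕ) * h) - v 0‖ ≤ C₁ * h ^ 2 := by
    rw [Nat.cast_zero, zero_mul, h0, sub_self, norm_zero]
    positivity
  calc ‖V (n * h) - v n‖
      ≤ (C₁ * h ^ 2 + n * (C₂ * h ^ 3)) * Real.exp (n * (2 * h * K)) :=
        le_add_mul_exp_of_two_step (d := fun n ↦ ‖V (n * h) - v n‖) (by positivity) (by positivity)
          (by positivity) hinit hstart hrec le_rfl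
    _ = (C₁ + n * h * C₂) * Real.exp (2 * K * (n * h)) * h ^ 2 := by ring_nf
    _ ≤ (C₁ + T * C₂) * Real.exp (2 * K * T) * h ^ 2 := by
        have : 0 ≤ T := le_trans (by positivity) hn
        gcongr

end IsLeapfrog

lemma exists_midpoint_defect_le {W : ℝ → E} (hT : 0 < T)
    (hV : ∀ t ∈ Icc 0 T, HasDerivWithinAt V (W t) (Icc 0 T) t) (hW : ContDiffOn ℝ 2 W (Icc 0 T)) :
    ∃ C : ℝ≥0, ∀ t h, 0 ≤ h → h ≤ t → t + h ≤ T →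
      ‖V (t + h) - V (t - h) - (2 * h) • W t‖ ≤ C * h ^ 3 := by
  have hW' : ContDiffOn ℝ 1 (derivWithin W (Icc 0 T)) (Icc 0 T) :=
    hW.derivWithin (uniqueDiffOn_Icc hT) (by norm_num)
  obtain ⟨K, hK⟩ := hW'.exists_lipschitzOnWith one_ne_zero (convex_Icc _ _) isCompact_Icc
  refine ⟨K / 3, fun t h hh hht htT ↦ ?_⟩
  have hsub : Icc (t - h) (t + h) ⊆ Icc 0 T := Icc_subset_Icc (sub_nonneg.2 hht) htT
  simpa using norm_midpoint_defect_le hh (fun x hx ↦ (hV x (hsub hx)).mono hsub)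
    (fun x hx ↦ ((hW.differentiableOn (by norm_num) x (hsub hx)).hasDerivWithinAt).mono hsub)
    (hK.mono hsub)

lemma exists_euler_defect_le {W : ℝ → E}
    (hV : ∀ t ∈ Icc 0 T, HasDerivWithinAt V (W t) (Icc 0 T) t) (hW : ContDiffOn ℝ 1 W (Icc 0 T)) :
    ∃ C : ℝ≥0, ∀ h, 0 ≤ h → h ≤ T → ‖V h - V 0 - h • W 0‖ ≤ C * h ^ 2 := by
  obtain ⟨K, hK⟩ := hW.exists_lipschitzOnWith one_ne_zero (convex_Icc _ _) isCompact_Icc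
  refine ⟨K / 2, fun h hh hhT ↦ ?_⟩
  have hsub : Icc 0 h ⊆ Icc 0 T := Icc_subset_Icc_right hhT
  simpa using norm_euler_defect_le hh (fun x hx ↦ (hV x (hsub hx)).mono hsub) (hK.mono hsub)

theorem leapfrog_second_order_convergence [CompleteSpace E]
    (hG : ContDiff ℝ 2 (Function.uncurry G)) (hGlip : ∀ t ∈ Icc 0 T, LipschitzWith K (G t))
    (hT : 0 < T) (hV : ∀ t ∈ Icc 0 T, HasDerivWithinAt V (G t (V t)) (Icc 0 T) t) :
    ∃ C : ℝ, ∀ h > 0, ∀ v, IsLeapfrog G h v → v 0 = V 0 →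
      ∀ n : ℕ, n * h ≤ T → ‖V (n * h) - v n‖ ≤ C * h ^ 2 := by
  have hVsmooth : ContDiffOn ℝ 2 V (Icc 0 T) :=
    ODE.contDiffOn_enat_Icc_of_hasDerivWithinAt (n := 2) hG.contDiffOn hV (mapsTo_univ _ _)
  have hVdot : ContDiffOn ℝ 2 (fun t ↦ G t (V t)) (Icc 0 T) :=
    hG.comp_contDiffOn (contDiffOn_id.prodMk hVsmooth)
  obtain ⟨C₁, hC₁⟩ := exists_euler_defect_le hV (hVdot.of_le one_le_two)
  obtain ⟨C₂, hC₂⟩ := exists_midpoint_defect_le hT hV hVdot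
  exact ⟨(C₁ + T * C₂) * Real.exp (2 * K * T), fun h hh v hv h0 n hn ↦
    hv.norm_error_le hh hGlip h0 (hC₁ h hh.le) (fun t ↦ hC₂ t h hh.le) hn⟩

end Leapfrog

section InteractionPicture

lemma exp_add_smul {R : Type*} [NormedRing R] [NormedAlgebra ℝ R] [CompleteSpace R] (x : R)
    (s t : ℝ) : exp ((s + t) • x) = exp (s • x) * exp (t • x) := by
  let := NormedAlgebra.restrictScalars ℚ ℝ R
  rw [add_smul, exp_add_of_commute (((Commute.refl x).smul_left s).smul_right t)]

lemma contDiff_exp_smul {R : Type*} [NormedRing R] [NormedAlgebra ℝ R] [CompleteSpace R] (x : R)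
    {n : WithTop ℕ∞} : ContDiff ℝ n fun t : ℝ ↦ exp (t • x) :=
  contDiff_iff_contDiffAt.2 fun t ↦
    (exp_analytic (𝕂 := ℝ) (t • x)).contDiffAt.comp t (contDiff_id.smul contDiff_const).contDiffAt

variable {E : Type*} [NormedAddCommGroup E] [NormedSpace ℝ E]

/-- The vector field `G(t, x) = exp(-tA) F(exp(tA) x)` which the semilinear equation
`U' = A U + F(U)` becomes for the interaction-picture variable `V t = exp(-tA) U(t)`. -/
noncomputable def interactionField (A : E →L[ℝ] E) (F : E → E) (t : ℝ) (x : E) : E :=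
  exp (-t • A) (F (exp (t • A) x))

/-- The symmetric exponential integrator (sEI) with step size `h` for `U' = A U + F(U)`, started
with an exponential Euler step. The term `u n` approximates `U (n * h)`. -/
structure IsSymmetricExpIntegrator (A : E →L[ℝ] E) (F : E → E) (h : ℝ) (u : ℕ → E) : Prop where
  euler : u 1 = exp (h • A) (u 0) + h • exp (h • A) (F (u 0))
  step (n : ℕ) : u (n + 2) = exp ((2 * h) • A) (u n) + (2 * h) • exp (h • A) (F (u (n + 1)))

variable {A : E →L[ℝ] E} {F : E → E}

lemma lipschitzWith_interactionField {K B : ℝ≥0} {t : ℝ} (hF : LipschitzWith K F)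
    (hneg : ‖exp (-t • A)‖₊ ≤ B) (hpos : ‖exp (t • A)‖₊ ≤ B) :
    LipschitzWith (B * (K * B)) (interactionField A F t) :=
  ((exp (-t • A)).lipschitz.weaken hneg).comp (hF.comp ((exp (t • A)).lipschitz.weaken hpos))

variable [CompleteSpace E]

lemma exp_smul_apply_exp_smul (A : E →L[ℝ] E) (s t : ℝ) (x : E) :
    exp (s • A) (exp (t • A) x) = exp ((s + t) • A) x :=
  DFunLike.congr_fun (exp_add_smul A s t).symm x

lemma exp_smul_apply_exp_neg_smul (A : E →L[ℝ] E) (t : ℝ) (x : E) :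
    exp (t • A) (exp (-t • A) x) = x := by
  rw [exp_smul_apply_exp_smul, add_neg_cancel, zero_smul, exp_zero, one_apply_eq_self]

lemma exists_nnnorm_exp_smul_le (A : E →L[ℝ] E) (T : ℝ) :
    ∃ B : ℝ≥0, ∀ t ∈ Icc (-T) T, ‖exp (t • A)‖₊ ≤ B := by
  obtain ⟨B, hB⟩ := isCompact_Icc.exists_bound_of_continuousOn
    (contDiff_exp_smul A (n := 0)).continuous.continuousOn (s := Icc (-T) T)
  exact ⟨B.toNNReal, fun t ht ↦ NNReal.le_toNNReal_of_coe_le (hB t ht)⟩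

lemma contDiff_interactionField {n : WithTop ℕ∞} (A : E →L[ℝ] E) (hF : ContDiff ℝ n F) :
    ContDiff ℝ n (Function.uncurry (interactionField A F)) :=
  ((contDiff_exp_smul A).comp contDiff_fst.neg).clm_apply
    (hF.comp (((contDiff_exp_smul A).comp contDiff_fst).clm_apply contDiff_snd))

lemma hasDerivWithinAt_interactionPicture {U : ℝ → E} {s : Set ℝ} {t : ℝ}
    (hU : HasDerivWithinAt U (A (U t) + F (U t)) s t) :
    HasDerivWithinAt (fun t ↦ exp (-t • A) (U t))
      (interactionField A F t (exp (-t • A) (U t))) s t := by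
  have hexp : HasDerivAt (fun t : ℝ ↦ exp (-t • A)) (-(exp (-t • A) * A)) t := by
    simpa [Function.comp_def] using
      (hasDerivAt_exp_smul_const (𝕂 := ℝ) A (-t)).scomp t (hasDerivAt_neg t)
  refine (hexp.hasDerivWithinAt.clm_apply hU).congr_deriv ?_
  rw [interactionField, exp_smul_apply_exp_neg_smul, map_add]
  exact neg_add_cancel_left (exp (-t • A) (A (U t))) _

lemma IsSymmetricExpIntegrator.isLeapfrog {h : ℝ} {u : ℕ → E}
    (hu : IsSymmetricExpIntegrator A F h u) :
    IsLeapfrog (interactionField A F) h fun n ↦ exp (-(n * h) • A) (u n) where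
  euler := by
    simp only [hu.euler, interactionField, Nat.cast_one, Nat.cast_zero, one_mul, zero_mul, map_add,
      map_smul, exp_smul_apply_exp_smul, neg_add_cancel, neg_zero, zero_smul, exp_zero,
      one_apply_eq_self]
  step n := by
    have hlinear : -((n + 2 : ℕ) * h) + 2 * h = -(n * h) := by push_cast; ring
    have hforce : -((n + 2 : ℕ) * h) + h = -((n + 1 : ℕ) * h) := by push_cast; ring
    simp only [hu.step, interactionField, map_add, map_smul, exp_smul_apply_exp_neg_smul]
    simp only [exp_smul_apply_exp_smul, hlinear, hforce]

end InteractionPicture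

theorem sEI_second_order_convergence_general {E : Type*} [NormedAddCommGroup E] [NormedSpace ℝ E]
    [CompleteSpace E] (A : E →L[ℝ] E) {F : E → E} (hF : ContDiff ℝ 2 F) {K : ℝ≥0}
    (hFlip : LipschitzWith K F) {T : ℝ} (hT : 0 < T) {U : ℝ → E}
    (hU : ∀ t ∈ Icc 0 T, HasDerivWithinAt U (A (U t) + F (U t)) (Icc 0 T) t) :
    ∃ C : ℝ, ∀ h > 0, ∀ u, IsSymmetricExpIntegrator A F h u → u 0 = U 0 →
      ∀ n : ℕ, n * h ≤ T → ‖U (n * h) - u n‖ ≤ C * h ^ 2 := by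
  obtain ⟨B, hB⟩ := exists_nnnorm_exp_smul_le A T
  have hlip (t : ℝ) (ht : t ∈ Icc 0 T) :
      LipschitzWith (B * (K * B)) (interactionField A F t) :=
    lipschitzWith_interactionField hFlip (hB _ ⟨neg_le_neg ht.2, by linarith [ht.1]⟩)
      (hB _ ⟨by linarith [ht.1], ht.2⟩)
  obtain ⟨C, hC⟩ := leapfrog_second_order_convergence (contDiff_interactionField A hF) hlip hT
    fun t ht ↦ hasDerivWithinAt_interactionPicture (hU t ht)
  refine ⟨B * C, fun h hh u hu h0 n hn ↦ ?_⟩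
  have hnh : (n * h : ℝ) ∈ Icc (-T) T := ⟨by linarith [show (0 : ℝ) ≤ n * h by positivity], hn⟩
  calc ‖U (n * h) - u n‖
      = ‖exp ((n * h) • A) (exp (-(n * h) • A) (U (n * h)) - exp (-(n * h) • A) (u n))‖ := by
        rw [map_sub, exp_smul_apply_exp_neg_smul, exp_smul_apply_exp_neg_smul]
    _ ≤ B * ‖exp (-(n * h) • A) (U (n * h)) - exp (-(n * h) • A) (u n)‖ :=
        (exp ((n * h) • A)).le_of_opNorm_le (hB _ hnh) _
    _ ≤ B * (C * h ^ 2) := by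
        gcongr
        exact hC h hh _ hu.isLeapfrog (by simp [h0]) n hn
    _ = B * C * h ^ 2 := by ring

open scoped Matrix.Norms.L2Operator in
lemma toEuclideanLin_exp_smul {ι : Type*} [Fintype ι] [DecidableEq ι] (L : Matrix ι ι ℝ) (t : ℝ) :
    Matrix.toEuclideanLin (exp (t • L)) = exp (t • Matrix.toEuclideanCLM (𝕜 := ℝ) L) := by
  let := NormedAlgebra.restrictScalars ℚ ℝ (Matrix ι ι ℝ)
  have hcont : Continuous (Matrix.toEuclideanCLM (n := ι) (𝕜 := ℝ)) :=
    LinearMap.continuous_of_finiteDimensional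
      (Matrix.toEuclideanCLM (n := ι) (𝕜 := ℝ)).toAlgEquiv.toLinearMap
  rw [← Matrix.coe_toEuclideanCLM_eq_toEuclideanLin, map_exp _ hcont, map_smul]

/-- **Second-order convergence of the symmetric exponential integrator.**
Let `L` be a real `m × m` matrix with `‖exp(hL)‖ ≤ 1 + h` for `h ∈ [0,1]` (stated
vectorwise in the Euclidean norm), let `F` be `C²` with `F`, `DF`, `D²F` globally bounded,
and let `U` be the exact solution of `U' = LU + F(U)` on `[0, T]`. For the numerical
solution started with `U⁰ = U(0)`, `U¹ = exp(hL) U⁰ + h exp(hL) F(U⁰)` and advanced via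
`Uⁿ⁺¹ = exp(2hL) Uⁿ⁻¹ + 2h exp(hL) F(Uⁿ)` for `n ≥ 1`, there is a constant `C`,
independent of `n` and `h` but depending on `T`, with `‖U(nh) − Uⁿ‖ ≤ C h²` for all
`0 ≤ n ≤ T/h`. -/
theorem sEI_second_order_convergence (m : ℕ) (L : Matrix (Fin m) (Fin m) ℝ)
    (hL : ∀ h ∈ Set.Icc (0:ℝ) 1, ∀ v : EuclideanSpace ℝ (Fin m),
      ‖Matrix.toEuclideanLin (NormedSpace.exp (h • L)) v‖ ≤ (1 + h) * ‖v‖)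
    (F : EuclideanSpace ℝ (Fin m) → EuclideanSpace ℝ (Fin m)) (hF : ContDiff ℝ 2 F)
    (M : ℝ) (hFb : ∀ x, ‖F x‖ ≤ M) (hDFb : ∀ x, ‖fderiv ℝ F x‖ ≤ M)
    (hD2Fb : ∀ x, ‖iteratedFDeriv ℝ 2 F x‖ ≤ M)
    (T : ℝ) (hT : 0 < T) (U : ℝ → EuclideanSpace ℝ (Fin m))
    (hU : ∀ t ∈ Set.Icc (0:ℝ) T,
      HasDerivWithinAt U (Matrix.toEuclideanLin L (U t) + F (U t)) (Set.Icc (0:ℝ) T) t) :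
    ∃ C : ℝ, ∀ h ∈ Set.Ioc (0:ℝ) 1, ∀ Un : ℕ → EuclideanSpace ℝ (Fin m),
      Un 0 = U 0 →
      Un 1 = Matrix.toEuclideanLin (NormedSpace.exp (h • L)) (U 0)
          + h • Matrix.toEuclideanLin (NormedSpace.exp (h • L)) (F (U 0)) →
      (∀ n : ℕ, 1 ≤ n →
        Un (n + 1) = Matrix.toEuclideanLin (NormedSpace.exp ((2 * h) • L)) (Un (n - 1))
          + (2 * h) • Matrix.toEuclideanLin (NormedSpace.exp (h • L)) (F (Un n))) →
      ∀ n : ℕ, (n : ℝ) ≤ T / h → ‖U (n * h) - Un n‖ ≤ C * h ^ 2 := by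
  simp only [toEuclideanLin_exp_smul]
  have hFlip : LipschitzWith M.toNNReal F :=
    lipschitzWith_of_nnnorm_fderiv_le (hF.differentiable two_ne_zero) fun x ↦
      NNReal.le_toNNReal_of_coe_le (hDFb x)
  obtain ⟨C, hC⟩ :=
    sEI_second_order_convergence_general (Matrix.toEuclideanCLM (𝕜 := ℝ) L) hF hFlip hT hU
  exact ⟨C, fun h hh Un h0 h1 hstep n hn ↦ hC h hh.1 Un
    ⟨by rwa [h0], fun n ↦ hstep (n + 1) (by omega)⟩ h0 n ((le_div_iff₀ hh.1).1 hn)⟩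
end
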